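/- arXiv:2410.14176 — 2 statements merged into one kernel-verified Lean document; each statement's English description precedes it below -/
import Mathlib

section
/- Let Ω ⊆ ℝ³ be open, u : ℝ³ → ℝ³ twice continuously differentiable on Ω, and ω : ℝ³ → ℝ³ continuously differentiable on Ω. Then at every point of Ω the first twisted de Rham composition vanishes: curl(grad u − mskw ω) = (grad ω)ᵀ − (div ω)·I, i.e. curl(grad u − mskw ω) − 𝒮(grad ω)·(−1)·(−1) recovers exactly the algebraic term −curl(mskw ω); in particular the composition of the twisted differentials d_V⁰(u,ω) = (grad u − mskw ω, grad ω) followed by the matching first component of d_V¹ is zero. -/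
open Matrix

noncomputable section

/-- Vectors in ℝ³. -/
abbrev V3 := Fin 3 → ℝ
/-- 3×3 real matrices. -/
abbrev M3 := Matrix (Fin 3) (Fin 3) ℝ

/-- Euclidean inner product on ℝ³. -/
def dot3 (u v : V3) : ℝ := ∑ i, u i * v i

/-- Frobenius inner product ⟨A,B⟩ = tr(AᵀB). -/
def frobInner (A B : M3) : ℝ := Matrix.trace (Aᵀ * B)

/-- Symmetric part of a matrix. -/
def symPart (A : M3) : M3 := (1/2 : ℝ) • (A + Aᵀ)

/-- Skew-symmetric part of a matrix. -/
def skwPart (A : M3) : M3 := (1/2 : ℝ) • (A - Aᵀ)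

/-- mskw : ℝ³ → ℝ^{3×3}. -/
def mskw (u : V3) : M3 :=
  !![0, -u 2, u 1; u 2, 0, -u 0; -u 1, u 0, 0]

/-- vskw : ℝ^{3×3} → ℝ³. -/
def vskw (A : M3) : V3 :=
  ![(A 2 1 - A 1 2)/2, (A 0 2 - A 2 0)/2, (A 1 0 - A 0 1)/2]

/-- Partial derivative ∂ⱼ f (Fréchet derivative in the j-th coordinate direction). -/
def pd (j : Fin 3) (f : V3 → ℝ) (x : V3) : ℝ := fderiv ℝ f x (Pi.single j 1)

/-- Jacobian matrix (grad v)ᵢⱼ = ∂ⱼ vᵢ of a vector field. -/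
def vgrad (v : V3 → V3) (x : V3) : M3 :=
  Matrix.of fun i j => pd j (fun y => v y i) x

/-- Divergence of a vector field. -/
def vdiv (v : V3 → V3) (x : V3) : ℝ :=
  pd 0 (fun y => v y 0) x + pd 1 (fun y => v y 1) x + pd 2 (fun y => v y 2) x

/-- Curl of a vector field. -/
def vcurl (v : V3 → V3) (x : V3) : V3 :=
  ![pd 1 (fun y => v y 2) x - pd 2 (fun y => v y 1) x,
    pd 2 (fun y => v y 0) x - pd 0 (fun y => v y 2) x,
    pd 0 (fun y => v y 1) x - pd 1 (fun y => v y 0) x]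

/-- Row-wise curl of a matrix field. -/
def mcurl (M : V3 → M3) (x : V3) : M3 :=
  Matrix.of fun i j => vcurl (fun y => M y i) x j

/-- Row-wise divergence of a matrix field. -/
def mdiv (M : V3 → M3) (x : V3) : V3 :=
  fun i => vdiv (fun y => M y i) x

/-- The algebraic operator 𝒮(A) = Aᵀ − (tr A)·I. -/
def Sop (A : M3) : M3 := Aᵀ - (Matrix.trace A) • (1 : M3)

/-- The inverse 𝒮⁻¹(B) = Bᵀ − ½(tr B)·I. -/
def Sinv (B : M3) : M3 := Bᵀ - ((1/2 : ℝ) * Matrix.trace B) • (1 : M3)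

/-- Cosserat material law C₁(ε) = 2μ sym ε + λ(tr ε)I + μ_c skw ε. -/
def C1 (μ lam μc : ℝ) (ε : M3) : M3 :=
  (2*μ) • symPart ε + (lam * Matrix.trace ε) • (1 : M3) + μc • skwPart ε

/-- Elasticity tensor 𝒞(ε) = 2μ sym ε + λ(tr ε)I. -/
def Cel (μ lam : ℝ) (ε : M3) : M3 :=
  (2*μ) • symPart ε + (lam * Matrix.trace ε) • (1 : M3)

/-- Curvature material law C₂(ε) = (γ+β) sym ε + α(tr ε)I + (γ−β) skw ε. -/
def C2mat (α β γ : ℝ) (ε : M3) : M3 :=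
  (γ+β) • symPart ε + (α * Matrix.trace ε) • (1 : M3) + (γ-β) • skwPart ε

/-!
The curl of each row of `grad u` vanishes because mixed second derivatives commute. The curl of
`mskw ω` involves only first derivatives of `ω`; collecting them gives `-𝒮(grad ω)`.
-/

open Filter Topology

lemma differentiableAt_fderiv_clm_comp {𝕜 E F G : Type*} [NontriviallyNormedField 𝕜]
    [NormedAddCommGroup E] [NormedSpace 𝕜 E] [NormedAddCommGroup F] [NormedSpace 𝕜 F]
    [NormedAddCommGroup G] [NormedSpace 𝕜 G] (L : F →L[𝕜] G) {v : E → F} {x : E}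
    (hv : ∀ᶠ y in 𝓝 x, DifferentiableAt 𝕜 v y) (hv' : DifferentiableAt 𝕜 (fderiv 𝕜 v) x) :
    DifferentiableAt 𝕜 (fderiv 𝕜 fun y => L (v y)) x := by
  have fderiv_eq : (fderiv 𝕜 fun y => L (v y)) =ᶠ[𝓝 x] fun y => L.comp (fderiv 𝕜 v y) :=
    hv.mono fun y hy => (L.hasFDerivAt.comp y hy.hasFDerivAt).fderiv
  exact ((differentiableAt_const L).clm_comp hv').congr_of_eventuallyEq fderiv_eq

section PartialDerivatives

variable {f g : V3 → ℝ} {x : V3}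

@[simp]
lemma pd_const (j : Fin 3) (c : ℝ) : pd j (fun _ => c) x = 0 := by
  simp [pd]

@[simp]
lemma pd_neg (j : Fin 3) (f : V3 → ℝ) : pd j (fun y => -f y) x = -pd j f x := by
  simp [pd]

lemma pd_sub (j : Fin 3) (hf : DifferentiableAt ℝ f x) (hg : DifferentiableAt ℝ g x) :
    pd j (fun y => f y - g y) x = pd j f x - pd j g x := by
  simp [pd, fderiv_fun_sub hf hg]

lemma differentiableAt_pd (j : Fin 3) (hf : DifferentiableAt ℝ (fderiv ℝ f) x) :
    DifferentiableAt ℝ (pd j f) x :=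
  hf.clm_apply (differentiableAt_const _)

lemma pd_pd (j k : Fin 3) (hf : DifferentiableAt ℝ (fderiv ℝ f) x) :
    pd j (pd k f) x = fderiv ℝ (fderiv ℝ f) x (Pi.single j 1) (Pi.single k 1) := by
  unfold pd
  simp [fderiv_clm_apply hf (differentiableAt_const _)]

lemma pd_comm (j k : Fin 3) (hf : ∀ᶠ y in 𝓝 x, DifferentiableAt ℝ f y)
    (hf' : DifferentiableAt ℝ (fderiv ℝ f) x) :
    pd j (pd k f) x = pd k (pd j f) x := by
  rw [pd_pd j k hf', pd_pd k j hf']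
  exact second_derivative_symmetric_of_eventually
    (hf.mono fun _ hy => hy.hasFDerivAt) hf'.hasFDerivAt _ _

end PartialDerivatives

section VectorFields

variable {v w : V3 → V3} {x : V3}

lemma vcurl_sub (hv : DifferentiableAt ℝ v x) (hw : DifferentiableAt ℝ w x) :
    vcurl (fun y => v y - w y) x = vcurl v x - vcurl w x := by
  rw [differentiableAt_pi] at hv hw
  ext j
  fin_cases j <;> simp [vcurl, pd_sub, hv, hw] <;> ring

lemma vcurl_pd_eq_zero {f : V3 → ℝ} (hf : ∀ᶠ y in 𝓝 x, DifferentiableAt ℝ f y)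
    (hf' : DifferentiableAt ℝ (fderiv ℝ f) x) :
    vcurl (fun y j => pd j f y) x = 0 := by
  ext j
  fin_cases j
  · exact sub_eq_zero.2 (pd_comm 1 2 hf hf')
  · exact sub_eq_zero.2 (pd_comm 2 0 hf hf')
  · exact sub_eq_zero.2 (pd_comm 0 1 hf hf')

lemma trace_vgrad (v : V3 → V3) (x : V3) : trace (vgrad v x) = vdiv v x :=
  Matrix.trace_fin_three _

end VectorFields

section MatrixFields

variable {u ω : V3 → V3} {x : V3}

lemma mcurl_sub {A B : V3 → M3} (hA : ∀ i, DifferentiableAt ℝ (fun y => A y i) x)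
    (hB : ∀ i, DifferentiableAt ℝ (fun y => B y i) x) :
    mcurl (fun y => A y - B y) x = mcurl A x - mcurl B x := by
  ext i j
  exact congrFun (vcurl_sub (hA i) (hB i)) j

lemma differentiableAt_vgrad_row (hu : ∀ᶠ y in 𝓝 x, DifferentiableAt ℝ u y)
    (hu' : DifferentiableAt ℝ (fderiv ℝ u) x) (i : Fin 3) :
    DifferentiableAt ℝ (fun y => vgrad u y i) x :=
  differentiableAt_pi.2 fun j =>
    differentiableAt_pd j
      (differentiableAt_fderiv_clm_comp (ContinuousLinearMap.proj (φ := fun _ => ℝ) i) hu hu')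

lemma mcurl_vgrad_eq_zero (hu : ∀ᶠ y in 𝓝 x, DifferentiableAt ℝ u y)
    (hu' : DifferentiableAt ℝ (fderiv ℝ u) x) : mcurl (vgrad u) x = 0 := by
  ext i j
  have hui : ∀ᶠ y in 𝓝 x, DifferentiableAt ℝ (fun z => u z i) y :=
    hu.mono fun _ hy => differentiableAt_pi.1 hy i
  have hui' : DifferentiableAt ℝ (fderiv ℝ fun z => u z i) x :=
    differentiableAt_fderiv_clm_comp (ContinuousLinearMap.proj (φ := fun _ => ℝ) i) hu hu'
  exact congrFun (vcurl_pd_eq_zero hui hui') j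

lemma differentiableAt_mskw_row (hω : DifferentiableAt ℝ ω x) (i : Fin 3) :
    DifferentiableAt ℝ (fun y => mskw (ω y) i) x := by
  rw [differentiableAt_pi] at hω ⊢
  intro j
  fin_cases i <;> fin_cases j <;> simp [mskw, hω]

lemma mcurl_mskw (ω : V3 → V3) (x : V3) :
    mcurl (fun y => mskw (ω y)) x = -Sop (vgrad ω x) := by
  rw [Sop, trace_vgrad]
  ext i j
  fin_cases i <;> fin_cases j <;> simp [mcurl, vcurl, mskw, vgrad, vdiv] <;> ring

end MatrixFields

theorem stmt9_general {u ω : V3 → V3} {x : V3} (hu : ∀ᶠ y in 𝓝 x, DifferentiableAt ℝ u y)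
    (hu' : DifferentiableAt ℝ (fderiv ℝ u) x) (hω : DifferentiableAt ℝ ω x) :
    mcurl (fun y => vgrad u y - mskw (ω y)) x = (vgrad ω x)ᵀ - (vdiv ω x) • (1 : M3) :=
  calc mcurl (fun y => vgrad u y - mskw (ω y)) x
      = mcurl (vgrad u) x - mcurl (fun y => mskw (ω y)) x :=
        mcurl_sub (differentiableAt_vgrad_row hu hu') (differentiableAt_mskw_row hω)
    _ = Sop (vgrad ω x) := by rw [mcurl_vgrad_eq_zero hu hu', mcurl_mskw, zero_sub, neg_neg]
    _ = (vgrad ω x)ᵀ - (vdiv ω x) • (1 : M3) := by rw [Sop, trace_vgrad]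

/-- First twisted de Rham composition:
curl(grad u − mskw ω) = (grad ω)ᵀ − (div ω)·I, for u C² and ω C¹ on Ω. -/
theorem stmt9 (Ω : Set V3) (hΩ : IsOpen Ω) (u ω : V3 → V3)
    (hu : ContDiffOn ℝ 2 u Ω) (hω : ContDiffOn ℝ 1 ω Ω) :
    ∀ x ∈ Ω,
      mcurl (fun y => vgrad u y - mskw (ω y)) x =
        (vgrad ω x)ᵀ - (vdiv ω x) • (1 : M3) := by
  intro x hx
  have hΩx : Ω ∈ 𝓝 x := hΩ.mem_nhds hx
  exact stmt9_general ((hu.differentiableOn two_ne_zero).eventually_differentiableAt hΩx)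
    (((hu.contDiffAt hΩx).fderiv_right (m := 1) le_rfl).differentiableAt one_ne_zero)
    ((hω.differentiableOn one_ne_zero).differentiableAt hΩx)
end
end

section
/- Let α, β, γ ∈ ℝ. The quadratic form A ↦ ⟨C₂(A), A⟩ on 3×3 real matrices is positive definite (i.e. ⟨C₂(A), A⟩ > 0 for all A ≠ 0) if and only if γ + β > 0, γ − β > 0, and 3α + γ + β > 0. -/
open Matrix

noncomputable section

/-!
Symmetric trace-free, skew-symmetric and scalar matrices span mutually orthogonal subspaces whose
sum is everything, and the law `ε ↦ p sym ε + a (tr ε) I + q skw ε` in dimension `N` acts on them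
as multiplication by `p`, `q` and `N a + p`. Hence its quadratic form is positive definite exactly
when these three eigenvalues are positive, as soon as all three subspaces are nonzero (`2 ≤ N`).
-/

section SkewSymmetric

variable {n R : Type*} [Fintype n] [CommRing R] [NoZeroDivisors R] [NeZero (2 : R)]

lemma trace_transpose_mul_eq_zero_of_isSymm_of_transpose_eq_neg
    {S W : Matrix n n R} (hS : S.IsSymm) (hW : Wᵀ = -W) : trace (Sᵀ * W) = 0 := by
  have self_eq_neg : trace (Sᵀ * W) = -trace (Sᵀ * W) :=
    calc
      trace (Sᵀ * W) = trace (Wᵀ * S) := by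
        rw [← trace_transpose, transpose_mul, transpose_transpose]
      _ = -trace (Sᵀ * W) := by rw [hW, neg_mul, trace_neg, trace_mul_comm, hS.eq]
  have : (2 : R) * trace (Sᵀ * W) = 0 := by linear_combination self_eq_neg
  exact (mul_eq_zero.mp this).resolve_left two_ne_zero

lemma trace_eq_zero_of_transpose_eq_neg {W : Matrix n n R} (hW : Wᵀ = -W) :
    trace W = 0 := by
  classical
  simpa using trace_transpose_mul_eq_zero_of_isSymm_of_transpose_eq_neg isSymm_one hW

end SkewSymmetric

section IsotropicLaw

variable {n K : Type*} [Field K]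

/-- The projection of square matrices of any size onto the symmetric ones, extending `symPart`.
It is zero in characteristic 2, where `1 / 2 = 0`. -/
def symmetricPart : Matrix n n K →ₗ[K] Matrix n n K :=
  (1 / 2 : K) • (LinearMap.id + (transposeLinearEquiv n n K K).toLinearMap)

/-- The projection of square matrices of any size onto the skew-symmetric ones, extending
`skwPart`. It is zero in characteristic 2, where `1 / 2 = 0`. -/
def skewPart : Matrix n n K →ₗ[K] Matrix n n K :=
  (1 / 2 : K) • (LinearMap.id - (transposeLinearEquiv n n K K).toLinearMap)

lemma symmetricPart_apply (A : Matrix n n K) : symmetricPart A = (1 / 2 : K) • (A + Aᵀ) := rfl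

lemma skewPart_apply (A : Matrix n n K) : skewPart A = (1 / 2 : K) • (A - Aᵀ) := rfl

lemma isSymm_symmetricPart (A : Matrix n n K) : (symmetricPart A).IsSymm := by
  simp [IsSymm, symmetricPart_apply, add_comm]

lemma transpose_skewPart (A : Matrix n n K) : (skewPart A)ᵀ = -skewPart A := by
  simp [skewPart_apply, ← smul_neg]

lemma symmetricPart_of_transpose_eq_neg {W : Matrix n n K} (hW : Wᵀ = -W) :
    symmetricPart W = 0 := by
  simp [symmetricPart_apply, hW]

lemma skewPart_of_isSymm {S : Matrix n n K} (hS : S.IsSymm) : skewPart S = 0 := by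
  simp [skewPart_apply, hS.eq]

section CharNeTwo

variable [NeZero (2 : K)]

lemma symmetricPart_add_skewPart (A : Matrix n n K) : symmetricPart A + skewPart A = A := by
  rw [symmetricPart_apply, skewPart_apply, ← smul_add, add_add_sub_cancel, ← two_smul K A,
    smul_smul, one_div_mul_cancel two_ne_zero, one_smul]

lemma symmetricPart_of_isSymm {S : Matrix n n K} (hS : S.IsSymm) : symmetricPart S = S := by
  simpa [skewPart_of_isSymm hS] using symmetricPart_add_skewPart S

lemma skewPart_of_transpose_eq_neg {W : Matrix n n K} (hW : Wᵀ = -W) : skewPart W = W := by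
  simpa [symmetricPart_of_transpose_eq_neg hW] using symmetricPart_add_skewPart W

end CharNeTwo

variable [Fintype n] [DecidableEq n]

lemma exists_eq_symm_traceless_add_skew_add_scalar [CharZero K] [Nonempty n]
    (A : Matrix n n K) :
    ∃ (D W : Matrix n n K) (s : K),
      D.IsSymm ∧ trace D = 0 ∧ Wᵀ = -W ∧ A = D + W + s • (1 : Matrix n n K) := by
  have card_ne_zero : (Fintype.card n : K) ≠ 0 := Nat.cast_ne_zero.mpr Fintype.card_ne_zero
  set S := symmetricPart A
  set s := trace S / Fintype.card n
  refine ⟨S - s • 1, skewPart A, s, (isSymm_symmetricPart A).sub (isSymm_one.smul s), ?_,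
    transpose_skewPart A, ?_⟩
  · rw [trace_sub, trace_smul, trace_one, smul_eq_mul, div_mul_cancel₀ _ card_ne_zero, sub_self]
  · rw [sub_add_eq_add_sub, sub_add_cancel, symmetricPart_add_skewPart]

/-- The isotropic linear material law `ε ↦ p sym ε + a (tr ε) I + q skw ε` in any dimension,
of which `C2mat` is an instance; `p`, `a`, `q` are independent moduli. -/
def isotropicLaw (p a q : K) : Matrix n n K →ₗ[K] Matrix n n K :=
  p • symmetricPart + a • (traceLinearMap n K K).smulRight 1 + q • skewPart

lemma isotropicLaw_apply (p a q : K) (A : Matrix n n K) :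
    isotropicLaw p a q A = p • symmetricPart A + (a * trace A) • 1 + q • skewPart A := by
  simp [isotropicLaw, mul_smul]

section Eigenspaces

variable [NeZero (2 : K)] (p a q : K)

lemma isotropicLaw_of_isSymm_of_trace_eq_zero {D : Matrix n n K} (hD : D.IsSymm)
    (hDtr : trace D = 0) : isotropicLaw p a q D = p • D := by
  simp [isotropicLaw_apply, symmetricPart_of_isSymm hD, skewPart_of_isSymm hD, hDtr]

lemma isotropicLaw_of_transpose_eq_neg {W : Matrix n n K} (hW : Wᵀ = -W) :
    isotropicLaw p a q W = q • W := by
  simp [isotropicLaw_apply, symmetricPart_of_transpose_eq_neg hW, skewPart_of_transpose_eq_neg hW,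
    trace_eq_zero_of_transpose_eq_neg hW]

lemma isotropicLaw_one :
    isotropicLaw p a q (1 : Matrix n n K) = (Fintype.card n * a + p) • 1 := by
  rw [isotropicLaw_apply, symmetricPart_of_isSymm isSymm_one, skewPart_of_isSymm isSymm_one,
    trace_one]
  module

lemma trace_transpose_isotropicLaw_mul_add_add {D W : Matrix n n K} (hD : D.IsSymm)
    (hDtr : trace D = 0) (hW : Wᵀ = -W) (s : K) :
    trace ((isotropicLaw p a q (D + W + s • 1))ᵀ * (D + W + s • 1)) =
      p * trace (Dᵀ * D) + q * trace (Wᵀ * W) +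
        (Fintype.card n * a + p) * trace ((s • (1 : Matrix n n K))ᵀ * s • (1 : Matrix n n K)) := by
  have hDW : trace (Dᵀ * W) = 0 := trace_transpose_mul_eq_zero_of_isSymm_of_transpose_eq_neg hD hW
  have hWD : trace (Wᵀ * D) = 0 := by
    rw [← trace_transpose, transpose_mul, transpose_transpose, hDW]
  have hWtr : trace W = 0 := trace_eq_zero_of_transpose_eq_neg hW
  simp only [map_add, map_smul, isotropicLaw_of_isSymm_of_trace_eq_zero p a q hD hDtr,
    isotropicLaw_of_transpose_eq_neg p a q hW, isotropicLaw_one, transpose_add, transpose_smul,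
    transpose_one, add_mul, mul_add, smul_mul_assoc, mul_smul_comm, one_mul, mul_one, trace_add,
    trace_smul, trace_transpose, hDW, hWD, hDtr, hWtr, smul_eq_mul]
  ring

end Eigenspaces

end IsotropicLaw

section Witnesses

variable (n K : Type*) [Nontrivial n] [Nontrivial K]

lemma exists_isSymm_trace_eq_zero_ne_zero [Fintype n] [NonAssocSemiring K] :
    ∃ D : Matrix n n K, D.IsSymm ∧ trace D = 0 ∧ D ≠ 0 := by
  classical
  obtain ⟨i, j, hij⟩ := exists_pair_ne n
  refine ⟨single i j 1 + single j i 1, ?_, ?_, fun h => ?_⟩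
  · simp [IsSymm, add_comm]
  · simp [trace_single_eq_of_ne, hij, hij.symm]
  · simpa [hij] using congr_fun₂ h i j

lemma exists_transpose_eq_neg_ne_zero [NonAssocRing K] :
    ∃ W : Matrix n n K, Wᵀ = -W ∧ W ≠ 0 := by
  classical
  obtain ⟨i, j, hij⟩ := exists_pair_ne n
  refine ⟨single i j 1 - single j i 1, by simp, fun h => ?_⟩
  simpa [hij] using congr_fun₂ h i j

end Witnesses

section Definiteness

variable {m n K : Type*} [Fintype m] [Fintype n]

lemma trace_transpose_mul_self_nonneg [Ring K] [LinearOrder K] [IsStrictOrderedRing K]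
    (A : Matrix m n K) : 0 ≤ trace (Aᵀ * A) := by
  rw [← vec_dotProduct_vec]
  exact Finset.sum_nonneg fun _ _ => mul_self_nonneg _

lemma trace_transpose_mul_self_pos [Ring K] [LinearOrder K] [IsStrictOrderedRing K]
    {A : Matrix m n K} (hA : A ≠ 0) : 0 < trace (Aᵀ * A) := by
  refine (trace_transpose_mul_self_nonneg A).lt_of_ne' ?_
  rwa [← vec_dotProduct_vec, Ne, dotProduct_self_eq_zero, vec_eq_zero_iff]

lemma pos_of_trace_transpose_smul_mul_self_pos [CommRing K] [LinearOrder K]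
    [IsStrictOrderedRing K] {r : K} {A : Matrix m n K} (h : 0 < trace ((r • A)ᵀ * A)) : 0 < r := by
  rw [transpose_smul, smul_mul, trace_smul, smul_eq_mul] at h
  exact pos_of_mul_pos_left h (trace_transpose_mul_self_nonneg A)

variable [DecidableEq n] [Field K] [LinearOrder K] [IsStrictOrderedRing K]

lemma trace_transpose_isotropicLaw_mul_self_pos {p a q : K} (hp : 0 < p) (hq : 0 < q)
    (ht : 0 < Fintype.card n * a + p) {A : Matrix n n K} (hA : A ≠ 0) :
    0 < trace ((isotropicLaw p a q A)ᵀ * A) := by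
  have : Nonempty n := by
    by_contra! _
    exact hA (Subsingleton.elim A 0)
  obtain ⟨D, W, s, hD, hDtr, hW, rfl⟩ := exists_eq_symm_traceless_add_skew_add_scalar A
  rw [trace_transpose_isotropicLaw_mul_add_add p a q hD hDtr hW]
  have hD_nonneg := mul_nonneg hp.le (trace_transpose_mul_self_nonneg D)
  have hW_nonneg := mul_nonneg hq.le (trace_transpose_mul_self_nonneg W)
  have hs_nonneg := mul_nonneg ht.le (trace_transpose_mul_self_nonneg (s • (1 : Matrix n n K)))
  have some_part_ne_zero : D ≠ 0 ∨ W ≠ 0 ∨ s • (1 : Matrix n n K) ≠ 0 := by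
    contrapose! hA
    obtain ⟨hD0, hW0, hs0⟩ := hA
    rw [hD0, hW0, hs0, add_zero, add_zero]
  rcases some_part_ne_zero with hD0 | hW0 | hs0
  · linarith [mul_pos hp (trace_transpose_mul_self_pos hD0)]
  · linarith [mul_pos hq (trace_transpose_mul_self_pos hW0)]
  · linarith [mul_pos ht (trace_transpose_mul_self_pos hs0)]

theorem stmt13_general [Nontrivial n] (p a q : K) :
    (∀ A : Matrix n n K, A ≠ 0 → 0 < trace ((isotropicLaw p a q A)ᵀ * A)) ↔
      0 < p ∧ 0 < q ∧ 0 < Fintype.card n * a + p := by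
  refine ⟨fun h => ⟨?_, ?_, ?_⟩, fun ⟨hp, hq, ht⟩ A hA =>
    trace_transpose_isotropicLaw_mul_self_pos hp hq ht hA⟩
  · obtain ⟨D, hD, hDtr, hD0⟩ := exists_isSymm_trace_eq_zero_ne_zero n K
    have energy_pos := h D hD0
    rw [isotropicLaw_of_isSymm_of_trace_eq_zero p a q hD hDtr] at energy_pos
    exact pos_of_trace_transpose_smul_mul_self_pos energy_pos
  · obtain ⟨W, hW, hW0⟩ := exists_transpose_eq_neg_ne_zero n K
    have energy_pos := h W hW0
    rw [isotropicLaw_of_transpose_eq_neg p a q hW] at energy_pos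
    exact pos_of_trace_transpose_smul_mul_self_pos energy_pos
  · have energy_pos := h 1 one_ne_zero
    rw [isotropicLaw_one] at energy_pos
    exact pos_of_trace_transpose_smul_mul_self_pos energy_pos

end Definiteness

lemma C2mat_eq_isotropicLaw (α β γ : ℝ) (A : M3) :
    C2mat α β γ A = isotropicLaw (γ + β) α (γ - β) A :=
  (isotropicLaw_apply _ _ _ A).symm

/-- The quadratic form A ↦ ⟨C₂(A),A⟩ is positive definite
iff γ + β > 0, γ − β > 0, and 3α + γ + β > 0. -/
theorem stmt13 (α β γ : ℝ) :
    (∀ A : M3, A ≠ 0 → 0 < frobInner (C2mat α β γ A) A) ↔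
      (0 < γ + β ∧ 0 < γ - β ∧ 0 < 3*α + γ + β) := by
  simpa [frobInner, C2mat_eq_isotropicLaw, add_assoc] using
    stmt13_general (n := Fin 3) (γ + β) α (γ - β)
end
end
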